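/- arXiv:2202.08308 — 7 statements merged into one kernel-verified Lean document; each statement's English description precedes it below -/
import Mathlib

section
/- Let n be a positive integer and λ an infinite cardinal. Let α be a nonzero element of the semigroup 𝓘_λ^n with rank α = m ≤ n. Then the partially ordered set (↑_≼ α, ≼) (the set of elements above α in the natural partial order, with the induced order) is order isomorphic to the partially ordered set (𝓘_λ^{n−m}, ≼). -/
/-!
Since `γ` is infinite and `α` is finite, the complements of the domain and of the range of `α`
are equinumerous with `γ`, so they are the ranges of injections `g, k : γ → γ`
(`exists_injective_range_eq_compl`). A partial bijection `β` above `α` is the disjoint union of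
`α` and a partial bijection between these two complements (`SymInvSg.diff_graph_eq`), of rank at
most `n - m`. Transporting that remainder along `g × k` gives the order isomorphism
`β ↦ (g × k)⁻¹(β)`, with inverse `δ ↦ α ∪ (g × k)(δ)`.
-/

open Set Topology Filter

/-- The symmetric inverse semigroup `𝓘_γ^n` of partial bijections of the set `γ`
of rank `≤ n`, represented by their (finite) graphs. -/
structure SymInvSg (γ : Type*) (n : ℕ) where
  graph : Set (γ × γ)
  inj' : ∀ ⦃x y x' y'⦄, (x, y) ∈ graph → (x', y') ∈ graph → (x = x' ↔ y = y')
  finite' : graph.Finite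
  card_le' : graph.ncard ≤ n

namespace SymInvSg

variable {γ : Type*} {n : ℕ}

theorem ext' {a b : SymInvSg γ n} (h : a.graph = b.graph) : a = b := by
  cases a; cases b; simpa using h

/-- Composition of partial bijections (in the left-to-right convention of
transformation semigroups, the choice of convention being immaterial). -/
instance : Mul (SymInvSg γ n) where
  mul a b :=
    { graph := {p | ∃ y, (p.1, y) ∈ a.graph ∧ (y, p.2) ∈ b.graph}
      inj' := by
        rintro x z x' z' ⟨y, hxy, hyz⟩ ⟨y', hxy', hyz'⟩
        constructor
        · rintro rfl
          have hy : y = y' := (a.inj' hxy hxy').mp rfl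
          subst hy
          exact (b.inj' hyz hyz').mp rfl
        · rintro rfl
          have hy : y = y' := (b.inj' hyz hyz').mpr rfl
          subst hy
          exact (a.inj' hxy hxy').mpr rfl
      finite' := by
        have : {p : γ × γ | ∃ y, (p.1, y) ∈ a.graph ∧ (y, p.2) ∈ b.graph} ⊆
            (fun q : (γ × γ) × (γ × γ) => (q.1.1, q.2.2)) '' (a.graph ×ˢ b.graph) := by
          rintro ⟨x, z⟩ ⟨y, hxy, hyz⟩
          exact ⟨((x, y), (y, z)), ⟨hxy, hyz⟩, rfl⟩
        exact Set.Finite.subset (Set.Finite.image _ (a.finite'.prod b.finite')) this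
      card_le' := by
        have hinj : Set.InjOn Prod.fst
            {p : γ × γ | ∃ y, (p.1, y) ∈ a.graph ∧ (y, p.2) ∈ b.graph} := by
          rintro ⟨x, z⟩ ⟨y, hxy, hyz⟩ ⟨x', z'⟩ ⟨y', hxy', hyz'⟩ h
          simp only at h
          subst h
          have hy : y = y' := (a.inj' hxy hxy').mp rfl
          subst hy
          have hz : z = z' := (b.inj' hyz hyz').mp rfl
          simp [hz]
        calc ({p : γ × γ | ∃ y, (p.1, y) ∈ a.graph ∧ (y, p.2) ∈ b.graph}).ncard
            ≤ (Prod.fst '' a.graph).ncard := by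
              refine Set.ncard_le_ncard_of_injOn Prod.fst ?_ hinj (a.finite'.image _)
              rintro ⟨x, z⟩ hp
              exact ⟨(x, hp.choose), hp.choose_spec.1, rfl⟩
          _ ≤ a.graph.ncard := Set.ncard_image_le a.finite'
          _ ≤ n := a.card_le' }

theorem mul_graph (a b : SymInvSg γ n) :
    (a * b).graph = {p : γ × γ | ∃ y, (p.1, y) ∈ a.graph ∧ (y, p.2) ∈ b.graph} := rfl

instance : Semigroup (SymInvSg γ n) where
  mul_assoc a b c := by
    refine ext' ?_
    simp only [mul_graph]
    ext ⟨x, w⟩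
    constructor
    · rintro ⟨z, ⟨y, hxy, hyz⟩, hzw⟩
      exact ⟨y, hxy, z, hyz, hzw⟩
    · rintro ⟨y, hxy, z, hyz, hzw⟩
      exact ⟨z, ⟨y, hxy, hyz⟩, hzw⟩

/-- The zero of `𝓘_γ^n` is the empty partial map. -/
instance : Zero (SymInvSg γ n) :=
  ⟨{ graph := ∅
     inj' := by simp
     finite' := Set.finite_empty
     card_le' := by simp }⟩

/-- The natural partial order on the inverse semigroup `𝓘_γ^n`:
`α ≼ β` iff the graph of `α` is contained in the graph of `β`. -/
instance : PartialOrder (SymInvSg γ n) where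
  le a b := a.graph ⊆ b.graph
  le_refl a := subset_rfl
  le_trans a b c h₁ h₂ := Set.Subset.trans h₁ h₂
  le_antisymm a b h₁ h₂ := ext' (subset_antisymm h₁ h₂)

/-- The rank of a partial bijection: the cardinality of its domain
(equivalently, of its graph). -/
noncomputable def rank (a : SymInvSg γ n) : ℕ := a.graph.ncard

/-- `𝓘_A^n`: the subsemigroup of partial bijections with domain and range inside `A`. -/
def restrictedTo (A : Set γ) : Set (SymInvSg γ n) :=
  {α | ∀ p ∈ α.graph, p.1 ∈ A ∧ p.2 ∈ A}

end SymInvSg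

/-- A topology is shift-continuous when all left and right translations are continuous,
i.e. the space is a semitopological semigroup. -/
def ShiftContinuous (X : Type*) [TopologicalSpace X] [Mul X] : Prop :=
  ∀ a : X, Continuous (fun x => a * x) ∧ Continuous (fun x => x * a)

/-- A space is feebly compact if every locally finite family of nonempty open sets is finite. -/
def FeeblyCompact (X : Type*) [TopologicalSpace X] : Prop :=
  ∀ F : Set (Set X), (∀ U ∈ F, IsOpen U ∧ U.Nonempty) →
    LocallyFinite (fun U : F => (U : Set X)) → F.Finite

/-- A space is sequentially pracompact if it has a dense subset `D` such that every
sequence in `D` has a convergent subsequence. -/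
def SequentiallyPracompact (X : Type*) [TopologicalSpace X] : Prop :=
  ∃ D : Set X, Dense D ∧ ∀ u : ℕ → X, (∀ k, u k ∈ D) →
    ∃ (x : X) (φ : ℕ → ℕ), StrictMono φ ∧ Filter.Tendsto (u ∘ φ) Filter.atTop (nhds x)

/-- A space is totally countably pracompact if it has a dense subset `D` such that every
sequence in `D` has a subsequence whose closure is compact. -/
def TotallyCountablyPracompact (X : Type*) [TopologicalSpace X] : Prop :=
  ∃ D : Set X, Dense D ∧ ∀ u : ℕ → X, (∀ k, u k ∈ D) →
    ∃ φ : ℕ → ℕ, StrictMono φ ∧ IsCompact (closure (Set.range (u ∘ φ)))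

/-- A space is countably pracompact if it has a dense subset `A` such that every infinite
subset of `A` has an accumulation point in the space. -/
def CountablyPracompact (X : Type*) [TopologicalSpace X] : Prop :=
  ∃ A : Set X, Dense A ∧ ∀ B ⊆ A, B.Infinite → ∃ x : X, AccPt x (Filter.principal B)

/-- A space is ω-bounded-pracompact if it has a dense subset `D` such that every countable
subset of `D` has compact closure. -/
def OmegaBoundedPracompact (X : Type*) [TopologicalSpace X] : Prop :=
  ∃ D : Set X, Dense D ∧ ∀ C ⊆ D, C.Countable → IsCompact (closure C)

/-- A space is feebly ω-bounded if for every sequence of nonempty open sets there is a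
compact set meeting all of them. -/
def FeeblyOmegaBounded (X : Type*) [TopologicalSpace X] : Prop :=
  ∀ U : ℕ → Set X, (∀ k, IsOpen (U k) ∧ (U k).Nonempty) →
    ∃ K : Set X, IsCompact K ∧ ∀ k, (K ∩ U k).Nonempty

/-- In an infinite type, the complement of a finite set is the range of an injection
of the whole type. -/
theorem exists_injective_range_eq_compl {γ : Type*} [Infinite γ] {s : Set γ} (hs : s.Finite) :
    ∃ g : γ → γ, Function.Injective g ∧ Set.range g = sᶜ := by
  have hcard : Cardinal.mk (sᶜ : Set γ) = Cardinal.mk γ :=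
    Cardinal.mk_compl_of_infinite s
      (lt_of_lt_of_le (Cardinal.lt_aleph0_iff_set_finite.mpr hs) (Cardinal.aleph0_le_mk γ))
  obtain ⟨e⟩ := Cardinal.eq.mp hcard
  refine ⟨fun x => (e.symm x : γ), Subtype.val_injective.comp e.symm.injective, ?_⟩
  ext x
  constructor
  · rintro ⟨y, rfl⟩
    exact (e.symm y).2
  · intro hx
    exact ⟨e ⟨x, hx⟩, by simp⟩

/-- For `β` above `α`, the part of `β` outside `α` is exactly the part of `β` that avoids both
the domain and the range of `α`. -/
theorem SymInvSg.diff_graph_eq {γ : Type*} {n : ℕ} {α β : SymInvSg γ n} (h : α ≤ β) :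
    β.graph \ α.graph =
      β.graph ∩ ((Prod.fst '' α.graph)ᶜ ×ˢ (Prod.snd '' α.graph)ᶜ) := by
  have hsub : α.graph ⊆ β.graph := h
  ext ⟨x, y⟩
  constructor
  · rintro ⟨hb, ha⟩
    refine ⟨hb, ?_, ?_⟩
    · rintro ⟨⟨x', y'⟩, hp, hx⟩
      have hx : x' = x := hx
      subst hx
      have hy : y = y' := (β.inj' hb (hsub hp)).mp rfl
      subst hy
      exact ha hp
    · rintro ⟨⟨x', y'⟩, hp, hy⟩
      have hy : y' = y := hy
      subst hy
      have hx : x = x' := (β.inj' hb (hsub hp)).mpr rfl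
      subst hx
      exact ha hp
  · rintro ⟨hb, hx, -⟩
    exact ⟨hb, fun ha => hx ⟨_, ha, rfl⟩⟩

/-- For a nonzero `α ∈ 𝓘_λ^n` of rank `m ≤ n` over an infinite cardinal `λ`,
the upper set `↑_≼ α` with the induced natural partial order is order isomorphic to
`(𝓘_λ^{n-m}, ≼)`. -/
theorem upperSet_orderIso_symInvSg {γ : Type*} [Infinite γ] {n m : ℕ} (hn : 0 < n)
    (α : SymInvSg γ n) (hα : α ≠ 0) (hrank : SymInvSg.rank α = m) (hmn : m ≤ n) :
    Nonempty ({β : SymInvSg γ n // α ≤ β} ≃o SymInvSg γ (n - m)) := by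
  obtain ⟨g, hg, hgr⟩ := exists_injective_range_eq_compl (α.finite'.image Prod.fst)
  obtain ⟨k, hk, hkr⟩ := exists_injective_range_eq_compl (α.finite'.image Prod.snd)
  have hP : Function.Injective (Prod.map g k) := hg.prodMap hk
  have hPr : Set.range (Prod.map g k) =
      (Prod.fst '' α.graph)ᶜ ×ˢ (Prod.snd '' α.graph)ᶜ := by
    rw [Set.range_prodMap, hgr, hkr]
  have hm : α.graph.ncard = m := hrank
  have hgα : ∀ x y, (g x, y) ∉ α.graph := fun x y h => by
    have hx : g x ∈ (Prod.fst '' α.graph)ᶜ := hgr ▸ Set.mem_range_self x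
    exact hx ⟨_, h, rfl⟩
  have hkα : ∀ x y, (x, k y) ∉ α.graph := fun x y h => by
    have hy : k y ∈ (Prod.snd '' α.graph)ᶜ := hkr ▸ Set.mem_range_self y
    exact hy ⟨_, h, rfl⟩
  have hdiff : ∀ {β : SymInvSg γ n}, α ≤ β →
      Prod.map g k '' (Prod.map g k ⁻¹' β.graph) = β.graph \ α.graph := fun {β} h => by
    rw [Set.image_preimage_eq_inter_range, hPr, SymInvSg.diff_graph_eq h]
  -- Pull the part of `β` outside `α` back along `g × k`.
  let F : {β : SymInvSg γ n // α ≤ β} → SymInvSg γ (n - m) := fun β =>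
    { graph := Prod.map g k ⁻¹' β.1.graph
      inj' := fun x y x' y' h h' =>
        hg.eq_iff.symm.trans ((β.1.inj' h h').trans hk.eq_iff)
      finite' := β.1.finite'.preimage hP.injOn
      card_le' := by
        rw [← Set.ncard_image_of_injective _ hP, hdiff β.2,
          Set.ncard_sdiff (show α.graph ⊆ β.1.graph from β.2) α.finite', hm]
        exact Nat.sub_le_sub_right β.1.card_le' m }
  -- Push `δ` forward along `g × k` and adjoin `α`.
  let G : SymInvSg γ (n - m) → {β : SymInvSg γ n // α ≤ β} := fun δ =>
    ⟨{ graph := α.graph ∪ Prod.map g k '' δ.graph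
       inj' := by
         rintro x y x' y' (h | ⟨⟨a, b⟩, h, hab⟩) (h' | ⟨⟨a', b'⟩, h', hab'⟩)
         · exact α.inj' h h'
         · obtain ⟨rfl, rfl⟩ := Prod.mk.inj hab'
           exact iff_of_false (fun e => hgα _ _ (e ▸ h)) (fun e => hkα _ _ (e ▸ h))
         · obtain ⟨rfl, rfl⟩ := Prod.mk.inj hab
           exact iff_of_false (fun e => hgα _ _ (e ▸ h')) (fun e => hkα _ _ (e ▸ h'))
         · obtain ⟨rfl, rfl⟩ := Prod.mk.inj hab
           obtain ⟨rfl, rfl⟩ := Prod.mk.inj hab'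
           exact hg.eq_iff.trans ((δ.inj' h h').trans hk.eq_iff.symm)
       finite' := α.finite'.union (δ.finite'.image _)
       card_le' := by
         refine (Set.ncard_union_le _ _).trans ?_
         rw [Set.ncard_image_of_injective _ hP, hm]
         have := δ.card_le'
         omega }, Set.subset_union_left⟩
  have hpre : Prod.map g k ⁻¹' α.graph = ∅ := by
    ext ⟨x, y⟩
    simpa using hgα x (k y)
  refine ⟨{ toFun := F, invFun := G, left_inv := ?_, right_inv := ?_, map_rel_iff' := ?_ }⟩
  · intro β
    refine Subtype.ext (SymInvSg.ext' ?_)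
    change α.graph ∪ Prod.map g k '' (Prod.map g k ⁻¹' β.1.graph) = β.1.graph
    rw [hdiff β.2]
    exact Set.union_sdiff_cancel β.2
  · intro δ
    refine SymInvSg.ext' ?_
    change Prod.map g k ⁻¹' (α.graph ∪ Prod.map g k '' δ.graph) = δ.graph
    rw [Set.preimage_union, hpre, Set.empty_union, Set.preimage_image_eq _ hP]
  · intro β β'
    change Prod.map g k ⁻¹' β.1.graph ⊆ Prod.map g k ⁻¹' β'.1.graph ↔ β.1.graph ⊆ β'.1.graph
    refine ⟨fun h => ?_, fun h => Set.preimage_mono h⟩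
    have h2 := Set.image_mono (f := Prod.map g k) h
    rw [hdiff β.2, hdiff β'.2] at h2
    rw [← Set.union_sdiff_cancel (show α.graph ⊆ β.1.graph from β.2)]
    exact Set.union_subset β'.2 (h2.trans Set.sdiff_subset)
end

section
/- Let λ be an infinite cardinal and let τ be a feebly compact topology on the semigroup 𝓘_λ^1 such that the set ↑_≼ α is both closed and open in (𝓘_λ^1, τ) for every α ∈ 𝓘_λ^1. Then the topology τ is compact. -/
/-!
A map of rank `1` is a maximal element of `𝓘_γ^1`, so its upper set is a singleton; hence every
nonzero point is isolated and closed. If `U` is an open neighbourhood of the zero, the singletons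
`{α}` with `α ∉ U` therefore form a locally finite family of open sets: `U` meets none of them, and
`{β}` meets at most one for `β ≠ 0`. Feeble compactness makes `Uᶜ` finite
(`SymInvSg.finite_compl_of_zero_mem`). Thus an ultrafilter that does not converge to the zero
contains a finite set, so it is principal and converges as well.
-/

open Set Topology Filter

theorem SymInvSg.Ici_eq_singleton {γ : Type*} {α : SymInvSg γ 1} (hα : α ≠ 0) :
    Set.Ici α = {α} := by
  have hne : α.graph.Nonempty := by
    rw [Set.nonempty_iff_ne_empty]
    exact fun h => hα (SymInvSg.ext' h)
  ext β
  rw [Set.mem_Ici, Set.mem_singleton_iff]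
  refine ⟨fun h => ?_, fun h => h.ge⟩
  refine (SymInvSg.ext' (Set.eq_of_subset_of_ncard_le h ?_ β.finite')).symm
  exact β.card_le'.trans ((Set.ncard_pos α.finite').mpr hne)

theorem SymInvSg.finite_compl_of_zero_mem {γ : Type*} [TopologicalSpace (SymInvSg γ 1)]
    (hfc : FeeblyCompact (SymInvSg γ 1))
    (hopen : ∀ α : SymInvSg γ 1, α ≠ 0 → IsOpen ({α} : Set (SymInvSg γ 1)))
    {U : Set (SymInvSg γ 1)} (hU : IsOpen U) (h0 : (0 : SymInvSg γ 1) ∈ U) : Uᶜ.Finite := by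
  have hfin : ((fun α : SymInvSg γ 1 => ({α} : Set (SymInvSg γ 1))) '' Uᶜ).Finite := by
    apply hfc
    · rintro _ ⟨α, hα, rfl⟩
      refine ⟨hopen α ?_, Set.singleton_nonempty α⟩
      rintro rfl
      exact hα h0
    · intro β
      by_cases hβ : β = 0
      · subst hβ
        refine ⟨U, hU.mem_nhds h0, ?_⟩
        convert Set.finite_empty
        rw [Set.eq_empty_iff_forall_notMem]
        rintro ⟨_, α, hα, rfl⟩ ⟨x, hx, hxU⟩
        rw [Set.mem_singleton_iff] at hx
        exact hα (hx ▸ hxU)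
      · refine ⟨{β}, (hopen β hβ).mem_nhds rfl, Set.Subsingleton.finite ?_⟩
        rintro ⟨_, α, hα, rfl⟩ ⟨x, hx, hxβ⟩ ⟨_, α', hα', rfl⟩ ⟨x', hx', hxβ'⟩
        simp only [Set.mem_singleton_iff] at hx hxβ hx' hxβ'
        simp [← hx, ← hx', hxβ, hxβ']
  exact hfin.of_finite_image Set.singleton_injective.injOn

/-- If `τ` is a feebly compact topology on `𝓘_λ^1` (`λ` an infinite cardinal)
such that every upper set `↑_≼ α` is closed-and-open, then `τ` is compact. -/
theorem compact_of_feeblyCompact_upperSets_clopen {γ : Type*} [Infinite γ]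
    [TopologicalSpace (SymInvSg γ 1)]
    (hfc : FeeblyCompact (SymInvSg γ 1))
    (hclopen : ∀ α : SymInvSg γ 1, IsClosed (Set.Ici α) ∧ IsOpen (Set.Ici α)) :
    CompactSpace (SymInvSg γ 1) := by
  have hopen : ∀ α : SymInvSg γ 1, α ≠ 0 → IsOpen ({α} : Set (SymInvSg γ 1)) := fun α hα =>
    SymInvSg.Ici_eq_singleton hα ▸ (hclopen α).2
  refine ⟨isCompact_iff_ultrafilter_le_nhds.mpr fun f _ => ?_⟩
  by_cases hf : ↑f ≤ 𝓝 (0 : SymInvSg γ 1)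
  · exact ⟨0, Set.mem_univ _, hf⟩
  · obtain ⟨U, ⟨h0, hU⟩, hUf⟩ : ∃ U : Set (SymInvSg γ 1), (0 ∈ U ∧ IsOpen U) ∧ U ∉ f := by
      by_contra! h
      exact hf ((nhds_basis_opens _).ge_iff.mpr h)
    obtain ⟨x, -, rfl⟩ := Ultrafilter.eq_pure_of_finite_mem
      (SymInvSg.finite_compl_of_zero_mem hfc hopen hU h0) (Ultrafilter.compl_mem_iff_notMem.mpr hUf)
    exact ⟨x, Set.mem_univ _, pure_le_nhds x⟩
end

section
/- Let n be an arbitrary positive integer and λ an arbitrary infinite cardinal. Then every feebly compact shift-continuous T₁-topology τ on the semigroup 𝓘_λ^n is sequentially pracompact. -/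
/-!
The set `↑α` of extensions of a partial bijection `α` is open: `β ↦ α⁻¹βα⁻¹` is continuous, takes
only finitely many values, and takes the value `α⁻¹` exactly on `↑α`; a finite set minus a point is
closed in a `T₁`-space (`isOpen_setOf_le`). An element of maximal rank in a nonempty open set is
therefore an isolated point, so the set of isolated points is dense (`dense_isolated`).

Let `u` be a sequence of isolated points. Say that `x` is an accumulation point of `u` along
`B ⊆ ℕ` if each neighbourhood of `x` contains `u k` for infinitely many `k ∈ B`. By feeble
compactness there is one along each infinite `B` (`accSet_nonempty`). An accumulation point `x`
satisfies `x ≤ u k` for infinitely many `k ∈ B`, because `↑x` is open. If `ρ` has maximal rank among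
the elements lying below infinitely many `u k` and `A = {k | ρ ≤ u k}`, every accumulation point
along a subset of `A` lies below `ρ`, and there are only finitely many of these. Now take an
infinite `B ⊆ A` with the least number of accumulation points. If `x` is one of them, `u` converges
to `x` along `B`: otherwise an infinite subset of `B` is mapped outside a neighbourhood of `x`, and
`x` is lost as an accumulation point.
-/

open Set Topology Filter

namespace SymInvSg

variable {γ : Type*} {n : ℕ}

/-- The inverse partial bijection. -/
def inverse (a : SymInvSg γ n) : SymInvSg γ n where
  graph := Prod.swap ⁻¹' a.graph
  inj' := fun _ _ _ _ h h' => (a.inj' h h').symm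
  finite' := a.finite'.preimage Prod.swap_injective.injOn
  card_le' := by
    refine le_trans ?_ a.card_le'
    exact Set.ncard_le_ncard_of_injOn Prod.swap (fun p hp => hp) Prod.swap_injective.injOn a.finite'

theorem graph_injective : Function.Injective (graph : SymInvSg γ n → Set (γ × γ)) :=
  fun _ _ h => ext' h

theorem finite_setOf_graph_subset {S : Set (γ × γ)} (hS : S.Finite) :
    {a : SymInvSg γ n | a.graph ⊆ S}.Finite :=
  hS.finite_subsets.preimage graph_injective.injOn

theorem inverse_mul_mul_inverse_eq_iff (a b : SymInvSg γ n) :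
    a.inverse * b * a.inverse = a.inverse ↔ a ≤ b := by
  constructor
  · rintro h ⟨x, y⟩ hxy
    have h1 : (y, x) ∈ (a.inverse * b * a.inverse).graph := by rw [h]; exact hxy
    obtain ⟨z, ⟨w, hw, hwz⟩, hz⟩ := h1
    have e1 : w = x := (a.inj' hw hxy).mpr rfl
    have e2 : z = y := ((a.inj' hz hxy).mp rfl)
    subst e1 e2
    exact hwz
  · intro h
    apply ext'
    ext ⟨y, x⟩
    constructor
    · rintro ⟨z, ⟨w, hw, hwz⟩, hz⟩
      have hw' : (w, y) ∈ a.graph := hw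
      have e : y = z := (b.inj' (h hw') hwz).mp rfl
      subst e
      exact hz
    · intro hyx
      exact ⟨y, ⟨x, hyx, h hyx⟩, hyx⟩

theorem finite_range_inverse_mul_mul_inverse (a : SymInvSg γ n) :
    (Set.range fun b => a.inverse * b * a.inverse).Finite := by
  refine (finite_setOf_graph_subset
    ((a.finite'.image Prod.snd).prod (a.finite'.image Prod.fst))).subset ?_
  rintro _ ⟨b, rfl⟩ ⟨y, x⟩ ⟨z, ⟨w, hw, -⟩, hz⟩
  exact ⟨⟨(w, y), hw, rfl⟩, ⟨(x, z), hz, rfl⟩⟩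

theorem isOpen_setOf_le [TopologicalSpace (SymInvSg γ n)] [T1Space (SymInvSg γ n)]
    (hsc : ShiftContinuous (SymInvSg γ n)) (a : SymInvSg γ n) : IsOpen {b | a ≤ b} := by
  have hcont : Continuous fun b => a.inverse * b * a.inverse :=
    (hsc a.inverse).2.comp (hsc a.inverse).1
  have hclosed : IsClosed ((Set.range fun b => a.inverse * b * a.inverse) \ {a.inverse}) :=
    ((finite_range_inverse_mul_mul_inverse a).subset Set.sdiff_subset).isClosed
  convert (hclosed.preimage hcont).isOpen_compl using 1
  ext b
  simp [← inverse_mul_mul_inverse_eq_iff]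

theorem rank_lt_rank {a b : SymInvSg γ n} (h : a < b) : a.rank < b.rank :=
  Set.ncard_lt_ncard h b.finite'

theorem finite_Iic (a : SymInvSg γ n) : (Set.Iic a).Finite :=
  finite_setOf_graph_subset a.finite'

theorem exists_maximal_of_nonempty {U : Set (SymInvSg γ n)} (hU : U.Nonempty) :
    ∃ a ∈ U, ∀ b ∈ U, a ≤ b → b = a := by
  have hbdd : BddAbove (rank '' U) := ⟨n, by rintro _ ⟨a, -, rfl⟩; exact a.card_le'⟩
  obtain ⟨a, haU, ha⟩ := Nat.sSup_mem (hU.image rank) hbdd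
  refine ⟨a, haU, fun b hb hab => ?_⟩
  by_contra hne
  have h1 := rank_lt_rank (lt_of_le_of_ne hab (Ne.symm hne))
  have h2 := le_csSup hbdd (Set.mem_image_of_mem rank hb)
  omega

theorem dense_isolated [TopologicalSpace (SymInvSg γ n)] [T1Space (SymInvSg γ n)]
    (hsc : ShiftContinuous (SymInvSg γ n)) : Dense {a : SymInvSg γ n | IsOpen {a}} := by
  rw [dense_iff_inter_open]
  intro U hUo hU
  obtain ⟨a, haU, ha⟩ := exists_maximal_of_nonempty hU
  refine ⟨a, haU, ?_⟩
  have : ({a} : Set (SymInvSg γ n)) = U ∩ {b | a ≤ b} := by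
    ext b
    constructor
    · rintro rfl
      exact ⟨haU, le_refl b⟩
    · rintro ⟨hb, hab⟩
      exact ha b hb hab
  change IsOpen {a}
  rw [this]
  exact hUo.inter (isOpen_setOf_le hsc a)

/-- Two partial bijections with a common extension have a join. -/
theorem exists_join {a b c : SymInvSg γ n} (hac : a ≤ c) (hbc : b ≤ c) :
    ∃ d : SymInvSg γ n, a ≤ d ∧ b ≤ d ∧ ∀ c', a ≤ c' → b ≤ c' → d ≤ c' := by
  have hsub : a.graph ∪ b.graph ⊆ c.graph := Set.union_subset hac hbc
  exact ⟨⟨a.graph ∪ b.graph, fun _ _ _ _ h h' => c.inj' (hsub h) (hsub h'),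
    a.finite'.union b.finite', (Set.ncard_le_ncard hsub c.finite').trans c.card_le'⟩,
    Set.subset_union_left, Set.subset_union_right, fun _ h h' => Set.union_subset h h'⟩

/-- Every sequence is, along some infinite set `A` of indices, such that the elements lying below
infinitely many of its terms are bounded by a single element `r`. -/
theorem exists_infinite_bound (u : ℕ → SymInvSg γ n) :
    ∃ (A : Set ℕ) (r : SymInvSg γ n), A.Infinite ∧
      ∀ x, {k ∈ A | x ≤ u k}.Infinite → x ≤ r := by
  have hne : {r : SymInvSg γ n | {k | r ≤ u k}.Infinite}.Nonempty := by
    refine ⟨0, ?_⟩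
    have : {k | (0 : SymInvSg γ n) ≤ u k} = Set.univ :=
      Set.eq_univ_of_forall fun k => Set.empty_subset _
    change {k | (0 : SymInvSg γ n) ≤ u k}.Infinite
    rw [this]
    exact Set.infinite_univ
  obtain ⟨r, hr, hmax⟩ := exists_maximal_of_nonempty hne
  refine ⟨{k | r ≤ u k}, r, hr, fun x hx => ?_⟩
  obtain ⟨k, hrk, hxk⟩ := hx.nonempty
  obtain ⟨d, hrd, hxd, hd⟩ := exists_join hrk hxk
  have : d = r := hmax d (hx.mono fun j hj => hd _ hj.1 hj.2) hrd
  exact this ▸ hxd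

end SymInvSg

/-- The accumulation points of the sequence `u` along the set `B` of indices. -/
def accSet {X : Type*} [TopologicalSpace X] (u : ℕ → X) (B : Set ℕ) : Set X :=
  {x | ∀ U ∈ 𝓝 x, {k ∈ B | u k ∈ U}.Infinite}

theorem accSet_mono {X : Type*} [TopologicalSpace X] (u : ℕ → X) {B C : Set ℕ} (h : B ⊆ C) :
    accSet u B ⊆ accSet u C :=
  fun _ hx U hU => (hx U hU).mono fun _ hk => ⟨h hk.1, hk.2⟩

theorem accSet_nonempty {X : Type*} [TopologicalSpace X] (hfc : FeeblyCompact X) {u : ℕ → X}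
    (hu : ∀ k, IsOpen {u k}) {B : Set ℕ} (hB : B.Infinite) : (accSet u B).Nonempty := by
  by_cases hfin : (u '' B).Finite
  · obtain ⟨x, hx⟩ : ∃ x, (B ∩ u ⁻¹' {x}).Infinite := by
      by_contra! h
      exact hB (Set.Finite.of_finite_fibers u hfin fun x _ => h x)
    exact ⟨x, fun U hU => hx.mono fun k hk => ⟨hk.1, by
      have : u k = x := hk.2
      rw [this]; exact mem_of_mem_nhds hU⟩⟩
  · by_contra hempty
    rw [Set.not_nonempty_iff_eq_empty] at hempty
    have hF : ((fun x : X => ({x} : Set X)) '' (u '' B)).Finite := by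
      apply hfc
      · rintro _ ⟨_, ⟨k, -, rfl⟩, rfl⟩
        exact ⟨hu k, Set.singleton_nonempty _⟩
      · intro x
        have hx : x ∉ accSet u B := by rw [hempty]; exact Set.notMem_empty x
        simp only [accSet, Set.mem_ofPred_eq, not_forall, Set.not_infinite] at hx
        obtain ⟨U, hU, hfinU⟩ := hx
        refine ⟨U, hU, ?_⟩
        refine Set.Finite.of_finite_image
          ((hfinU.image fun k => ({u k} : Set X)).subset ?_) Subtype.val_injective.injOn
        rintro _ ⟨⟨_, _, ⟨k, hk, rfl⟩, rfl⟩, ⟨y, hy, hyU⟩, rfl⟩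
        have hyk : y = u k := hy
        exact ⟨k, ⟨hk, hyk ▸ hyU⟩, rfl⟩
    exact hfin (hF.of_finite_image Set.singleton_injective.injOn)

/-- If `u` has at least one accumulation point along each infinite set of indices, and finitely many
along `A`, then a subsequence of `u` converges. -/
theorem exists_tendsto_of_finite_accSet {X : Type*} [TopologicalSpace X] {u : ℕ → X} {A : Set ℕ}
    (hA : A.Infinite) (hfin : (accSet u A).Finite)
    (hne : ∀ B : Set ℕ, B.Infinite → (accSet u B).Nonempty) :
    ∃ (x : X) (φ : ℕ → ℕ), StrictMono φ ∧ Tendsto (u ∘ φ) atTop (𝓝 x) := by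
  obtain ⟨B, ⟨hBA, hB⟩, hmin⟩ := exists_minimalFor_of_wellFoundedLT
    (fun B : Set ℕ => B ⊆ A ∧ B.Infinite) (fun B => (accSet u B).ncard) ⟨A, subset_rfl, hA⟩
  obtain ⟨x, hx⟩ := hne B hB
  have hfinB := hfin.subset (accSet_mono u hBA)
  have hconv : ∀ U ∈ 𝓝 x, {k ∈ B | u k ∉ U}.Finite := by
    intro U hU
    by_contra hinf
    have hsub : {k ∈ B | u k ∉ U} ⊆ B := fun k hk => hk.1
    have hlt : (accSet u {k ∈ B | u k ∉ U}).ncard < (accSet u B).ncard := by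
      refine Set.ncard_lt_ncard ((Set.ssubset_iff_of_subset (accSet_mono u hsub)).mpr
        ⟨x, hx, fun hx' => ?_⟩) hfinB
      obtain ⟨k, hk, hkU⟩ := (hx' U hU).nonempty
      exact hk.2 hkU
    exact absurd (hmin ⟨hsub.trans hBA, hinf⟩ hlt.le) (not_le.mpr hlt)
  refine ⟨x, Nat.nth (· ∈ B), Nat.nth_strictMono hB, fun U hU => ?_⟩
  have hmono := Nat.nth_strictMono (p := (· ∈ B)) hB
  have h := hmono.injective.tendsto_cofinite.eventually (hconv U hU).eventually_cofinite_notMem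
  rw [Nat.cofinite_eq_atTop] at h
  refine h.mono fun k hk => ?_
  by_contra hkU
  exact hk ⟨Nat.nth_mem_of_infinite hB k, hkU⟩

/-- Every feebly compact shift-continuous `T₁`-topology on `𝓘_λ^n`
(`n` a positive integer, `λ` an infinite cardinal) is sequentially pracompact. -/
theorem sequentiallyPracompact_of_feeblyCompact {γ : Type*} [Infinite γ] {n : ℕ} (hn : 0 < n)
    [TopologicalSpace (SymInvSg γ n)] [T1Space (SymInvSg γ n)]
    (hsc : ShiftContinuous (SymInvSg γ n))
    (hfc : FeeblyCompact (SymInvSg γ n)) :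
    SequentiallyPracompact (SymInvSg γ n) := by
  refine ⟨{a | IsOpen {a}}, SymInvSg.dense_isolated hsc, fun u hu => ?_⟩
  obtain ⟨A, r, hA, hr⟩ := SymInvSg.exists_infinite_bound u
  refine exists_tendsto_of_finite_accSet hA (r.finite_Iic.subset fun x hx => hr x ?_)
    fun B hB => accSet_nonempty hfc hu hB
  exact hx _ ((SymInvSg.isOpen_setOf_le hsc x).mem_nhds (le_refl x))
end

section
/- Let {𝓘_{λ_i}^{n_i} : i ∈ J} be a family of semigroups, where each λ_i is an infinite cardinal and each n_i is a positive integer, and suppose each 𝓘_{λ_i}^{n_i} carries a feebly compact shift-continuous T₁-topology (so it is a feebly compact T₁-semitopological semigroup). Let X = ∏_{i∈J} 𝓘_{λ_i}^{n_i} be the Tychonoff product. Then for every idempotent p of the semigroup X, the Σ-product Σ(p, X) = {x ∈ X : |{i ∈ J : x(i) ≠ p(i)}| ≤ ω}, with the subspace topology, is feebly compact. -/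
/-!
Write `S = 𝓘_γ^n`. For `a : S` the map `b ↦ ε b ε'`, with `ε`, `ε'` the identities of the domain and
the range of `a`, is continuous with finite image, and its fibre over `a` is the up-set `↑a = Ici a`;
since `S` is `T₁`, `↑a` is clopen (`isClopen_Ici`). Hence elements of rank `n` are isolated.

If infinitely many elements of rank `n` pairwise meet exactly in `β` (a Δ-system with root `β`), then
every point other than `β` has a neighbourhood (`↑δ`, or the complement of `↑β`) containing at
most one of them, so feeble compactness forces every neighbourhood of `β` to contain one of
them (`no_delta_system`). Two consequences follow.
* Elements of rank `n` are dense, because `γ` is infinite (`exists_rank_eq`).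
* Every sequence of elements of rank `n` converges along every ultrafilter on `ℕ`, the limit being
  the set of pairs that belong to almost all the graphs (`exists_tendsto`).

Given infinitely many open sets in the `Σ`-product, choose points `x k` in countably many of them
that differ from `p` only on a fixed countable set `C` of coordinates and have maximal rank at all
coordinates in `C`. They converge coordinatewise along a nonprincipal ultrafilter, the limit lies in
the `Σ`-product, and the open sets are not locally finite there.
-/

open Set Topology Filter

namespace SymInvSg

variable {γ : Type*} {n : ℕ}

/-! ### Restriction and extension of partial bijections -/

/-- The identity map of the image of `a.graph` under `f`; for `f = Prod.fst` and `f = Prod.snd`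
it is the identity of the domain and of the range of `a`. -/
def idOn (a : SymInvSg γ n) (f : γ × γ → γ) : SymInvSg γ n where
  graph := (fun q => (f q, f q)) '' a.graph
  inj' := by
    rintro x y x' y' ⟨q, -, hq⟩ ⟨q', -, hq'⟩
    simp only [Prod.mk.injEq] at hq hq'
    rw [← hq.1, ← hq.2, ← hq'.1, ← hq'.2]
  finite' := a.finite'.image _
  card_le' := (Set.ncard_image_le a.finite').trans a.card_le'

theorem idOn_mul_mul_graph (a b : SymInvSg γ n) :
    (a.idOn Prod.fst * b * a.idOn Prod.snd).graph =
      {q ∈ b.graph | q.1 ∈ Prod.fst '' a.graph ∧ q.2 ∈ Prod.snd '' a.graph} := by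
  ext ⟨x, y⟩
  constructor
  · rintro ⟨z, ⟨w, ⟨q, hq, hqe⟩, hb⟩, ⟨r, hr, hre⟩⟩
    simp only [Prod.mk.injEq] at hqe hre
    obtain ⟨rfl, rfl⟩ := hqe
    obtain ⟨rfl, rfl⟩ := hre
    exact ⟨hb, ⟨q, hq, rfl⟩, ⟨r, hr, rfl⟩⟩
  · rintro ⟨hb, ⟨q, hq, hqe⟩, ⟨r, hr, hre⟩⟩
    simp only at hqe hre
    subst hqe hre
    exact ⟨r.2, ⟨q.1, ⟨q, hq, rfl⟩, hb⟩, ⟨r, hr, rfl⟩⟩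

theorem idOn_mul_mul_eq_iff (a b : SymInvSg γ n) :
    a.idOn Prod.fst * b * a.idOn Prod.snd = a ↔ a ≤ b := by
  constructor
  · intro h q hq
    rw [← h, idOn_mul_mul_graph] at hq
    exact hq.1
  · intro h
    apply ext'
    rw [idOn_mul_mul_graph]
    ext ⟨x, y⟩
    constructor
    · rintro ⟨hb, ⟨⟨x', y'⟩, hq, hx⟩, -⟩
      simp only at hx
      subst hx
      have : y' = y := (b.inj' (h hq) hb).mp rfl
      exact this ▸ hq
    · intro hq
      exact ⟨h hq, ⟨_, hq, rfl⟩, ⟨_, hq, rfl⟩⟩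

theorem finite_range_idOn_mul_mul (a : SymInvSg γ n) :
    (range fun b : SymInvSg γ n => a.idOn Prod.fst * b * a.idOn Prod.snd).Finite := by
  have hfin : (𝒫 ((Prod.fst '' a.graph) ×ˢ (Prod.snd '' a.graph))).Finite :=
    ((a.finite'.image _).prod (a.finite'.image _)).finite_subsets
  refine Set.Finite.of_finite_image (f := SymInvSg.graph) (hfin.subset ?_)
    (fun _ _ _ _ h => ext' h)
  rintro _ ⟨_, ⟨b, rfl⟩, rfl⟩ q hq
  rw [idOn_mul_mul_graph] at hq
  exact hq.2

theorem eq_of_le_of_rank_eq {a b : SymInvSg γ n} (ha : a.rank = n) (h : a ≤ b) : a = b :=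
  ext' (Set.eq_of_subset_of_ncard_le h (by have := b.card_le'; unfold rank at ha; omega) b.finite')

/-- Above any `β` there is an element of rank `n` whose graph avoids a given finite set
of pairs outside `β`: fresh fixed points are added to `β`. -/
theorem exists_extension [Infinite γ] (β : SymInvSg γ n) {E : Set (γ × γ)} (hE : E.Finite) :
    ∃ y : SymInvSg γ n, y.rank = n ∧ β ≤ y ∧ E ∩ y.graph ⊆ β.graph := by
  classical
  have hB : (Prod.fst '' (β.graph ∪ E) ∪ Prod.snd '' (β.graph ∪ E)).Finite :=
    ((β.finite'.union hE).image _).union ((β.finite'.union hE).image _)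
  obtain ⟨T, hT, hTc⟩ := hB.infinite_compl.exists_subset_card_eq (n - β.graph.ncard)
  have hT1 : ∀ z ∈ T, ∀ q ∈ β.graph ∪ E, q.1 ≠ z ∧ q.2 ≠ z := by
    intro z hz q hq
    refine ⟨fun h => hT hz (Or.inl ⟨q, hq, h⟩), fun h => hT hz (Or.inr ⟨q, hq, h⟩)⟩
  have hfin : ((fun z => (z, z)) '' (T : Set γ)).Finite := T.finite_toSet.image _
  have hcard : (β.graph ∪ (fun z => (z, z)) '' (T : Set γ)).ncard = n := by
    rw [Set.ncard_union_eq _ β.finite' hfin,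
      Set.ncard_image_of_injective _ (fun a b h => (Prod.mk.inj h).1), Set.ncard_coe_finset, hTc]
    · have := β.card_le'
      omega
    · rw [Set.disjoint_left]
      rintro q hq ⟨z, hz, rfl⟩
      exact (hT1 z hz _ (Or.inl hq)).1 rfl
  refine ⟨⟨β.graph ∪ (fun z => (z, z)) '' (T : Set γ), ?_, β.finite'.union hfin, hcard.le⟩,
    hcard, Set.subset_union_left, ?_⟩
  · rintro x y x' y' (h | ⟨z, hz, h⟩) (h' | ⟨z', hz', h'⟩)
    · exact β.inj' h h'
    · simp only [Prod.mk.injEq] at h'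
      obtain ⟨rfl, rfl⟩ := h'
      have := hT1 _ hz' _ (Or.inl h)
      exact iff_of_false this.1 this.2
    · simp only [Prod.mk.injEq] at h
      obtain ⟨rfl, rfl⟩ := h
      have := hT1 _ hz _ (Or.inl h')
      exact iff_of_false (Ne.symm this.1) (Ne.symm this.2)
    · simp only [Prod.mk.injEq] at h h'
      rw [← h.1, ← h.2, ← h'.1, ← h'.2]
  · rintro q ⟨hq, hq' | ⟨z, hz, rfl⟩⟩
    · exact hq'
    · exact absurd rfl (hT1 z hz _ (Or.inr hq)).1

/-! ### Feebly compact shift-continuous topologies on `𝓘_γ^n` -/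

variable [TopologicalSpace (SymInvSg γ n)] [T1Space (SymInvSg γ n)]

theorem isClopen_Ici (hsc : ShiftContinuous (SymInvSg γ n)) (a : SymInvSg γ n) :
    IsClopen (Ici a) := by
  set φ : SymInvSg γ n → SymInvSg γ n := fun b => a.idOn Prod.fst * b * a.idOn Prod.snd with hφ
  have hc : Continuous φ := (hsc _).2.comp (hsc _).1
  have h1 : Ici a = φ ⁻¹' {a} := by
    ext b
    exact (idOn_mul_mul_eq_iff a b).symm
  have h2 : Ici a = (φ ⁻¹' (range φ \ {a}))ᶜ := by
    rw [h1]
    ext b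
    simp
  refine ⟨h1 ▸ isClosed_singleton.preimage hc, ?_⟩
  rw [h2]
  exact (((finite_range_idOn_mul_mul a).subset sdiff_subset).isClosed.preimage hc).isOpen_compl

theorem isOpen_singleton_of_rank_eq (hsc : ShiftContinuous (SymInvSg γ n)) {a : SymInvSg γ n}
    (ha : a.rank = n) : IsOpen {a} := by
  have : ({a} : Set (SymInvSg γ n)) = Ici a := by
    ext b
    exact ⟨fun h => (h : b = a) ▸ self_mem_Ici, fun h => (eq_of_le_of_rank_eq ha h).symm⟩
  rw [this]
  exact (isClopen_Ici hsc a).isOpen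

/-- A neighbourhood of `β` cannot miss an infinite Δ-system of elements of rank `n` with root `β`.
The Δ-system is given by the one-step extension property that produces it recursively. -/
theorem no_delta_system (hsc : ShiftContinuous (SymInvSg γ n)) (hfc : FeeblyCompact (SymInvSg γ n))
    {β : SymInvSg γ n} {W : Set (SymInvSg γ n)} (hW : IsOpen W) (hβ : β ∈ W)
    (h : ∀ s : Finset (SymInvSg γ n), (∀ x ∈ s, x.rank = n ∧ β ≤ x ∧ x ∉ W) →
      ∃ y : SymInvSg γ n, (y.rank = n ∧ β ≤ y ∧ y ∉ W) ∧
        ∀ x ∈ s, x.graph ∩ y.graph ⊆ β.graph) : False := by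
  obtain ⟨f, hf, hlt⟩ := exists_seq_of_forall_finset_exists _ _ h
  have hne : ∀ i j, i ≠ j → (f i).graph ∩ (f j).graph ⊆ β.graph := by
    intro i j hij
    rcases lt_or_gt_of_ne hij with h | h
    · exact hlt _ _ h
    · rw [inter_comm]
      exact hlt _ _ h
  have hinj : Function.Injective f := by
    intro i j hij
    by_contra hc
    have := hne i j hc
    rw [← hij, inter_self] at this
    exact (hf i).2.2 (le_antisymm (hf i).2.1 this ▸ hβ)
  have hinj' : Function.Injective (fun k => ({f k} : Set (SymInvSg γ n))) :=
    fun i j hij => hinj (singleton_injective hij)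
  refine Set.infinite_range_of_injective hinj' (hfc _ ?_ ?_)
  · rintro _ ⟨k, rfl⟩
    exact ⟨isOpen_singleton_of_rank_eq hsc (hf k).1, singleton_nonempty _⟩
  · intro δ
    by_cases h1 : β ≤ δ
    · by_cases h2 : δ ≤ β
      · obtain rfl := le_antisymm h1 h2
        refine ⟨W, hW.mem_nhds hβ, Set.Subsingleton.finite ?_⟩
        rintro ⟨_, ⟨k, rfl⟩⟩ hk
        exact absurd (singleton_inter_nonempty.mp hk) (hf k).2.2
      · refine ⟨Ici δ, (isClopen_Ici hsc δ).isOpen.mem_nhds self_mem_Ici, Set.Subsingleton.finite ?_⟩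
        rintro ⟨_, ⟨k, rfl⟩⟩ hk ⟨_, ⟨l, rfl⟩⟩ hl
        have hk' : f k ∈ Ici δ := singleton_inter_nonempty.mp hk
        have hl' : f l ∈ Ici δ := singleton_inter_nonempty.mp hl
        by_cases hkl : k = l
        · subst hkl
          rfl
        · exact absurd ((subset_inter (mem_Ici.mp hk') (mem_Ici.mp hl')).trans (hne k l hkl)) h2
    · refine ⟨(Ici β)ᶜ, (isClopen_Ici hsc β).compl.isOpen.mem_nhds h1, Set.Subsingleton.finite ?_⟩
      rintro ⟨_, ⟨k, rfl⟩⟩ hk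
      exact absurd (hf k).2.1 (singleton_inter_nonempty.mp hk)

/-- The elements of rank `n` are dense. -/
theorem exists_rank_eq [Infinite γ] (hsc : ShiftContinuous (SymInvSg γ n))
    (hfc : FeeblyCompact (SymInvSg γ n)) {W : Set (SymInvSg γ n)} (hW : IsOpen W)
    (hne : W.Nonempty) : ∃ y ∈ W, y.rank = n := by
  obtain ⟨β, hβ⟩ := hne
  by_contra hc
  push Not at hc
  refine no_delta_system hsc hfc hW hβ fun s _ => ?_
  obtain ⟨y, hy, hβy, hs⟩ := exists_extension β
    (E := ⋃ x ∈ s, x.graph) (s.finite_toSet.biUnion fun x _ => x.finite')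
  refine ⟨y, ⟨hy, hβy, fun h => hc y h hy⟩, fun x hx q hq => hs ⟨?_, hq.2⟩⟩
  exact mem_biUnion (Finset.mem_coe.mpr hx) hq.1

/-- Sequences of elements of rank `n` converge along every ultrafilter. -/
theorem exists_tendsto (hsc : ShiftContinuous (SymInvSg γ n))
    (hfc : FeeblyCompact (SymInvSg γ n)) (𝒰 : Ultrafilter ℕ) (u : ℕ → SymInvSg γ n)
    (hu : ∀ k, (u k).rank = n) : ∃ β, Tendsto u 𝒰 (𝓝 β) := by
  classical
  -- The limit consists of the pairs that belong to almost all the graphs.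
  set B : Set (γ × γ) := {q | ∀ᶠ k in (𝒰 : Filter ℕ), q ∈ (u k).graph} with hB
  have hsub : ∀ t : Finset (γ × γ), (t : Set (γ × γ)) ⊆ B →
      ∀ᶠ k in (𝒰 : Filter ℕ), (t : Set (γ × γ)) ⊆ (u k).graph := by
    intro t ht
    exact (Filter.eventually_all_finset t).mpr fun q hq => ht hq
  have hcard : ∀ t : Finset (γ × γ), (t : Set (γ × γ)) ⊆ B → t.card ≤ n := by
    intro t ht
    obtain ⟨k, hk⟩ := (hsub t ht).exists
    rw [← Set.ncard_coe_finset]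
    exact (Set.ncard_le_ncard hk (u k).finite').trans (u k).card_le'
  have hBfin : B.Finite := by
    by_contra hinf
    obtain ⟨t, ht, htc⟩ := Set.Infinite.exists_subset_card_eq hinf (n + 1)
    have := hcard t ht
    omega
  have hBcard : B.ncard ≤ n := by
    rw [Set.ncard_eq_toFinset_card B hBfin]
    exact hcard _ (by simp)
  let β : SymInvSg γ n := ⟨B, by
    intro x y x' y' h h'
    obtain ⟨k, hk, hk'⟩ := (h.and h').exists
    exact (u k).inj' hk hk', hBfin, hBcard⟩
  have hβ : ∀ᶠ k in (𝒰 : Filter ℕ), β ≤ u k := by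
    have := hsub hBfin.toFinset (by simp)
    filter_upwards [this] with k hk
    rwa [hBfin.coe_toFinset] at hk
  refine ⟨β, ?_⟩
  rw [tendsto_nhds]
  intro W hW hβW
  by_contra hnot
  have hA : ∀ᶠ k in (𝒰 : Filter ℕ), u k ∉ W := Ultrafilter.compl_mem_iff_notMem.mpr hnot
  refine no_delta_system hsc hfc hW hβW fun s _ => ?_
  have hs : ∀ᶠ k in (𝒰 : Filter ℕ), ∀ x ∈ s, x.graph ∩ (u k).graph ⊆ β.graph := by
    refine (Filter.eventually_all_finset s).mpr fun x _ => ?_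
    have : ∀ᶠ k in (𝒰 : Filter ℕ), ∀ q ∈ x.graph, q ∈ (u k).graph → q ∈ B := by
      refine (Filter.eventually_all_finite x.finite').mpr fun q _ => ?_
      by_cases hq : q ∈ B
      · exact Filter.Eventually.of_forall fun _ _ => hq
      · filter_upwards [Ultrafilter.eventually_not.mpr hq] with k hk h
        exact absurd h hk
    filter_upwards [this] with k hk q hq
    exact hk q hq.1 hq.2
  obtain ⟨k, ⟨h1, h2⟩, h3⟩ := ((hβ.and hA).and hs).exists
  exact ⟨u k, ⟨hu k, h1, h2⟩, h3⟩

end SymInvSg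

/-! ### The `Σ`-product -/

/-- For a family of feebly compact `T₁`-semitopological semigroups
`𝓘_{λ_i}^{n_i}` and any idempotent `p` of the Tychonoff product `X`, the `Σ`-product
`Σ(p, X) = {x ∈ X : |{i : x i ≠ p i}| ≤ ω}` is feebly compact. -/
theorem feeblyCompact_sigmaProduct {J : Type*} {γ : J → Type*} [∀ i, Infinite (γ i)]
    {n : J → ℕ} (hn : ∀ i, 0 < n i)
    [∀ i, TopologicalSpace (SymInvSg (γ i) (n i))] [∀ i, T1Space (SymInvSg (γ i) (n i))]
    (hsc : ∀ i, ShiftContinuous (SymInvSg (γ i) (n i)))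
    (hfc : ∀ i, FeeblyCompact (SymInvSg (γ i) (n i)))
    (p : ∀ i, SymInvSg (γ i) (n i)) (hp : p * p = p) :
    FeeblyCompact {x : ∀ i, SymInvSg (γ i) (n i) | {i | x i ≠ p i}.Countable} := by
  classical
  intro F hF hlf
  by_contra hinf
  have hinf' : F.Infinite := hinf
  let U : ℕ ↪ F := hinf'.natEmbedding
  -- Each `U k` contains the trace of a box with finite support `I k`.
  have hbox : ∀ k, ∃ (I : Finset J) (v : ∀ i, Set (SymInvSg (γ i) (n i))),
      (∀ i, IsOpen (v i) ∧ (v i).Nonempty) ∧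
      ∀ x : {x : ∀ i, SymInvSg (γ i) (n i) | {i | x i ≠ p i}.Countable},
        (∀ i ∈ I, x.1 i ∈ v i) → x ∈ (U k : Set _) := by
    intro k
    obtain ⟨hopen, z, hz⟩ := hF _ (U k).2
    obtain ⟨V, hV, hVU⟩ := isOpen_induced_iff.mp hopen
    have hzV : z.1 ∈ V := by
      rw [← hVU] at hz
      exact hz
    obtain ⟨I, v, hv, hsub⟩ := isOpen_pi_iff.mp hV z.1 hzV
    refine ⟨I, fun i => if i ∈ I then v i else univ, fun i => ?_, fun x hx => ?_⟩
    · by_cases hi : i ∈ I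
      · simp only [hi, if_true]
        exact ⟨(hv i hi).1, _, (hv i hi).2⟩
      · simp only [hi, if_false]
        exact ⟨isOpen_univ, p i, trivial⟩
    · rw [← hVU]
      refine hsub fun i hi => ?_
      have := hx i hi
      simpa only [Finset.mem_coe.mp hi, if_true] using this
  choose I v hv hsub using hbox
  choose d hd hdr using fun k i =>
    SymInvSg.exists_rank_eq (hsc i) (hfc i) (hv k i).1 (hv k i).2
  choose L hL using fun i =>
    SymInvSg.exists_tendsto (hsc i) (hfc i) (hyperfilter ℕ) (fun k => d k i) (fun k => hdr k i)
  let C : Set J := ⋃ k, (I k : Set J)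
  have hC : C.Countable := countable_iUnion fun k => (I k).countable_toSet
  have hmem : ∀ g : ∀ i, SymInvSg (γ i) (n i),
      {i | (if i ∈ C then g i else p i) ≠ p i}.Countable := by
    intro g
    refine hC.mono fun i hi => ?_
    by_contra hiC
    exact hi (if_neg hiC)
  let x : ℕ → {x : ∀ i, SymInvSg (γ i) (n i) | {i | x i ≠ p i}.Countable} :=
    fun k => ⟨fun i => if i ∈ C then d k i else p i, hmem _⟩
  let y : {x : ∀ i, SymInvSg (γ i) (n i) | {i | x i ≠ p i}.Countable} :=
    ⟨fun i => if i ∈ C then L i else p i, hmem _⟩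
  have hxU : ∀ k, x k ∈ (U k : Set _) := by
    intro k
    refine hsub k _ fun i hi => ?_
    have hiC : i ∈ C := mem_iUnion.mpr ⟨k, hi⟩
    simp only [x, hiC, if_true]
    exact hd k i
  have hlim : Tendsto x (hyperfilter ℕ : Filter ℕ) (𝓝 y) := by
    rw [tendsto_subtype_rng, tendsto_pi_nhds]
    intro i
    by_cases hi : i ∈ C
    · simpa only [x, y, hi, if_true] using hL i
    · simpa only [x, y, hi, if_false] using tendsto_const_nhds
  obtain ⟨t, ht, hfin⟩ := hlf y
  have hfin' : {k | ((U k : Set _) ∩ t).Nonempty}.Finite :=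
    hfin.preimage (f := U) U.injective.injOn
  refine notMem_hyperfilter_of_finite hfin' ?_
  filter_upwards [hlim ht] with k hk
  exact ⟨x k, hxU k, hk⟩
end

section
/- There exists a Hausdorff shift-continuous topology τ on the countable semigroup 𝓘_ω^2 such that (𝓘_ω^2, τ) is a countably pracompact (hence feebly compact) semitopological semigroup which is not compact and not ω-bounded-pracompact. -/
/-!
Write `↑p` for the set of all partial bijections whose graph contains `p ∈ ℕ × ℕ`, `sng p` for the
rank-one element with graph `{p}`, and `Δ` for the set of all rank-one idempotents `sng (n, n)`.
The topology used here makes elements of rank `2` isolated, gives `sng p` the neighbourhoods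
`↑p ∖ (finite set)`, and gives `0` the neighbourhoods containing everything outside
`Δ ∪ ↑p₁ ∪ ⋯ ∪ ↑pₖ`. It is the usual compact topology with `Δ` forced to stay away from `0`.

* Each `↑p` is clopen, and these sets separate points, so the space is Hausdorff.
* A translation by `a` can produce an element `sng (m, m)` only for the at most two values of `m`
  in the domain (or range) of `a`, so removing `Δ` from the neighbourhoods of `0` does not destroy
  continuity of translations (`continuous_mul_left`). Inversion is a homeomorphic anti-automorphism,
  which gives the right translations.
* The complement of `Δ` is dense, and an infinite subset of it accumulates at `sng p` if it meets
  some `↑p` in an infinite set and at `0` otherwise: the space is countably pracompact, and therefore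
  feebly compact.
* `Δ` is infinite, closed and discrete, so the space is not compact. As the space is countable,
  being ω-bounded-pracompact would force a countable dense set to have compact closure, that is,
  the whole space to be compact.
-/

open Set Topology Filter

namespace SymInvSg

/-! ### Partial bijections of rank at most two -/

/-- The partial bijection of rank one with graph `{p}`. -/
def sng (p : ℕ × ℕ) : SymInvSg ℕ 2 where
  graph := {p}
  inj' := by
    rintro x y x' y' rfl h
    simp only [Set.mem_singleton_iff, Prod.mk.injEq] at h
    simp [h.1, h.2]
  finite' := Set.finite_singleton p
  card_le' := by simp

/-- The rank-two idempotent with domain `{n, n + k + 1}`. -/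
def diagPair (n k : ℕ) : SymInvSg ℕ 2 where
  graph := {(n, n), (n + k + 1, n + k + 1)}
  inj' := by
    intro x y x' y' h h'
    simp only [Set.mem_insert_iff, Set.mem_singleton_iff, Prod.mk.injEq] at h h'
    omega
  finite' := by simp
  card_le' := (Set.ncard_insert_le _ _).trans (by rw [Set.ncard_singleton])

/-- The inverse partial bijection. -/
def inv (x : SymInvSg ℕ 2) : SymInvSg ℕ 2 where
  graph := Prod.swap ⁻¹' x.graph
  inj' := fun _ _ _ _ h h' => (x.inj' h h').symm
  finite' := x.finite'.preimage Prod.swap_injective.injOn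
  card_le' := by
    rw [Set.ncard_preimage_of_injective_subset_range Prod.swap_injective
      (by rw [Prod.swap_surjective.range_eq]; exact Set.subset_univ _)]
    exact x.card_le'

/-- The set `Δ` of rank-one idempotents. -/
def diag : Set (SymInvSg ℕ 2) := Set.range fun n : ℕ => sng (n, n)

/-- The set `↑p` of partial bijections whose graph contains `p`. -/
def up (p : ℕ × ℕ) : Set (SymInvSg ℕ 2) := {x | p ∈ x.graph}

theorem mem_sng {p q : ℕ × ℕ} : q ∈ (sng p).graph ↔ q = p := Iff.rfl

theorem notMem_zero (p : ℕ × ℕ) : p ∉ (0 : SymInvSg ℕ 2).graph := fun h => h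

theorem mem_mul {a b : SymInvSg ℕ 2} {s t : ℕ} :
    (s, t) ∈ (a * b).graph ↔ ∃ y, (s, y) ∈ a.graph ∧ (y, t) ∈ b.graph := Iff.rfl

theorem inv_inv (x : SymInvSg ℕ 2) : x.inv.inv = x := ext' rfl

theorem inv_mul (a b : SymInvSg ℕ 2) : (a * b).inv = b.inv * a.inv := by
  refine ext' (Set.ext fun ⟨s, t⟩ => ?_)
  exact exists_congr fun y => and_comm

/-- A partial bijection of rank at most two is determined by two distinct points of its graph. -/
theorem eq_of_mem {p q : ℕ × ℕ} (hpq : p ≠ q) {x y : SymInvSg ℕ 2} (hxp : p ∈ x.graph)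
    (hxq : q ∈ x.graph) (hyp : p ∈ y.graph) (hyq : q ∈ y.graph) : x = y := by
  have key : ∀ z : SymInvSg ℕ 2, p ∈ z.graph → q ∈ z.graph → {p, q} = z.graph := by
    intro z hp hq
    refine Set.eq_of_subset_of_ncard_le (Set.pair_subset hp hq) ?_ z.finite'
    rw [Set.ncard_pair hpq]
    exact z.card_le'
  exact ext' ((key x hxp hxq).symm.trans (key y hyp hyq))

theorem finite_two_points (p : ℕ × ℕ) {F : Set (ℕ × ℕ)} (hF : F.Finite) :
    {x : SymInvSg ℕ 2 | p ∈ x.graph ∧ ∃ q ∈ F, q ≠ p ∧ q ∈ x.graph}.Finite := by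
  have h : (⋃ q ∈ F, {x : SymInvSg ℕ 2 | p ∈ x.graph ∧ q ≠ p ∧ q ∈ x.graph}).Finite := by
    refine hF.biUnion fun q _ => Set.Subsingleton.finite ?_
    rintro x ⟨h1, h2, h3⟩ y ⟨h4, _, h6⟩
    exact eq_of_mem h2 h3 h1 h6 h4
  refine h.subset ?_
  rintro x ⟨h1, q, hq, h2, h3⟩
  exact Set.mem_biUnion hq ⟨h1, h2, h3⟩

theorem exists_ne_of_ne_sng {p : ℕ × ℕ} {x : SymInvSg ℕ 2} (hp : p ∈ x.graph) (hx : x ≠ sng p) :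
    ∃ q ∈ x.graph, q ≠ p := by
  by_contra! h
  exact hx (ext' (Set.eq_singleton_iff_unique_mem.2 ⟨hp, h⟩))

/-! ### The topology and the Hausdorff property -/

/-- The topology with isolated elements of rank two in which `↑p ∖ (finite set)` are the basic
neighbourhoods of `sng p`, and the sets `X ∖ (Δ ∪ ⋃ p ∈ F, ↑p)` with `F` finite are those of `0`. -/
@[reducible] def tau : TopologicalSpace (SymInvSg ℕ 2) where
  IsOpen U :=
    (0 ∈ U → ∃ F : Set (ℕ × ℕ), F.Finite ∧ ∀ x ∉ U, x ∈ diag ∨ ∃ p ∈ F, p ∈ x.graph) ∧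
    ∀ p, sng p ∈ U → {x : SymInvSg ℕ 2 | p ∈ x.graph ∧ x ∉ U}.Finite
  isOpen_univ := ⟨fun _ => ⟨∅, Set.finite_empty, fun x hx => (hx trivial).elim⟩, fun p _ => by simp⟩
  isOpen_inter := by
    rintro U V ⟨hU, hU'⟩ ⟨hV, hV'⟩
    refine ⟨?_, ?_⟩
    · rintro ⟨h0, h0'⟩
      obtain ⟨F, hF, h⟩ := hU h0
      obtain ⟨G, hG, h'⟩ := hV h0'
      refine ⟨F ∪ G, hF.union hG, fun x hx => ?_⟩
      by_cases hxU : x ∈ U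
      · rcases h' x (fun hxV => hx ⟨hxU, hxV⟩) with h1 | ⟨p, hp, h1⟩
        · exact Or.inl h1
        · exact Or.inr ⟨p, Or.inr hp, h1⟩
      · rcases h x hxU with h1 | ⟨p, hp, h1⟩
        · exact Or.inl h1
        · exact Or.inr ⟨p, Or.inl hp, h1⟩
    · rintro p ⟨hp, hp'⟩
      refine ((hU' p hp).union (hV' p hp')).subset ?_
      rintro x ⟨hx, hxUV⟩
      by_cases hxU : x ∈ U
      · exact Or.inr ⟨hx, fun hxV => hxUV ⟨hxU, hxV⟩⟩
      · exact Or.inl ⟨hx, hxU⟩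
  isOpen_sUnion := by
    intro S hS
    refine ⟨?_, ?_⟩
    · rintro ⟨U, hU, h0⟩
      obtain ⟨F, hF, h⟩ := (hS U hU).1 h0
      exact ⟨F, hF, fun x hx => h x fun hxU => hx ⟨U, hU, hxU⟩⟩
    · rintro p ⟨U, hU, hp⟩
      refine ((hS U hU).2 p hp).subset ?_
      rintro x ⟨hx, hxS⟩
      exact ⟨hx, fun hxU => hxS ⟨U, hU, hxU⟩⟩

section

attribute [local instance] tau

theorem isOpen_tau_iff {U : Set (SymInvSg ℕ 2)} : IsOpen U ↔
    (0 ∈ U → ∃ F : Set (ℕ × ℕ), F.Finite ∧ ∀ x ∉ U, x ∈ diag ∨ ∃ p ∈ F, p ∈ x.graph) ∧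
    ∀ p, sng p ∈ U → {x : SymInvSg ℕ 2 | p ∈ x.graph ∧ x ∉ U}.Finite := Iff.rfl

theorem isOpen_up (p : ℕ × ℕ) : IsOpen (up p) := by
  refine isOpen_tau_iff.2 ⟨fun h => (notMem_zero p h).elim, fun q hq => ?_⟩
  obtain rfl : p = q := hq
  refine Set.finite_empty.subset ?_
  rintro x ⟨h, h'⟩
  exact h' h

theorem isOpen_compl_up (p : ℕ × ℕ) : IsOpen (up p)ᶜ := by
  refine isOpen_tau_iff.2 ⟨fun _ => ⟨{p}, Set.finite_singleton p, fun x hx => ?_⟩, fun q hq => ?_⟩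
  · exact Or.inr ⟨p, rfl, not_not.1 hx⟩
  · refine (finite_two_points q (Set.finite_singleton p)).subset ?_
    rintro x ⟨h, h'⟩
    exact ⟨h, p, rfl, hq, not_not.1 h'⟩

theorem t2Space_tau : T2Space (SymInvSg ℕ 2) := by
  refine ⟨fun x y hxy => ?_⟩
  obtain ⟨p, hp⟩ : ∃ p, ¬ (p ∈ x.graph ↔ p ∈ y.graph) := by
    by_contra! h
    exact hxy (ext' (Set.ext h))
  by_cases hx : p ∈ x.graph
  · have hy : p ∉ y.graph := fun hy => hp ⟨fun _ => hy, fun _ => hx⟩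
    exact ⟨up p, (up p)ᶜ, isOpen_up p, isOpen_compl_up p, hx, hy, disjoint_compl_right⟩
  · have hy : p ∈ y.graph := by tauto
    exact ⟨(up p)ᶜ, up p, isOpen_compl_up p, isOpen_up p, hx, hy, disjoint_compl_left⟩

/-! ### Continuity of translations -/

/-- If `a * x` misses a neighbourhood of `0`, then the graph of `x` meets a fixed finite set of
points whose first coordinates lie in the range of `a`. The elements of `Δ` are no obstruction,
since `a * x = sng (m, m)` forces `m` to be in the domain of `a`. -/
theorem exists_finite_of_mul_notMem {U : Set (SymInvSg ℕ 2)} (hU : IsOpen U) (h0 : 0 ∈ U)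
    (a : SymInvSg ℕ 2) : ∃ G : Set (ℕ × ℕ), G.Finite ∧ (∀ q ∈ G, ∃ r, (r, q.1) ∈ a.graph) ∧
      ∀ x, a * x ∉ U → ∃ q ∈ G, q ∈ x.graph := by
  obtain ⟨F, hF, h⟩ := (isOpen_tau_iff.1 hU).1 h0
  refine ⟨(Prod.snd '' a.graph) ×ˢ (Prod.snd '' F ∪ Prod.fst '' a.graph),
    (a.finite'.image _).prod ((hF.image _).union (a.finite'.image _)), ?_, fun x hx => ?_⟩
  · rintro ⟨q, n⟩ ⟨⟨⟨r, q'⟩, hr, rfl⟩, _⟩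
    exact ⟨r, hr⟩
  · rcases h _ hx with ⟨m, hm⟩ | ⟨⟨s, t⟩, hp, hst⟩
    · have hmm : (m, m) ∈ (a * x).graph := by rw [← hm]; exact rfl
      obtain ⟨y, hy, hy'⟩ := mem_mul.1 hmm
      exact ⟨(y, m), ⟨⟨_, hy, rfl⟩, Or.inr ⟨_, hy, rfl⟩⟩, hy'⟩
    · obtain ⟨y, hy, hy'⟩ := mem_mul.1 hst
      exact ⟨(y, t), ⟨⟨_, hy, rfl⟩, Or.inl ⟨_, hp, rfl⟩⟩, hy'⟩

theorem mul_zero' (a : SymInvSg ℕ 2) : a * 0 = 0 := by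
  refine ext' (Set.eq_empty_of_forall_notMem ?_)
  rintro ⟨s, t⟩ ⟨y, _, hy⟩
  exact hy

theorem continuous_mul_left (a : SymInvSg ℕ 2) : Continuous fun x : SymInvSg ℕ 2 => a * x := by
  refine continuous_def.2 fun U hU => isOpen_tau_iff.2 ⟨fun h0 => ?_, ?_⟩
  · rw [Set.mem_preimage, mul_zero'] at h0
    obtain ⟨G, hG, _, h⟩ := exists_finite_of_mul_notMem hU h0 a
    exact ⟨G, hG, fun x hx => Or.inr (h x hx)⟩
  · rintro ⟨s, t⟩ hst
    rw [Set.mem_preimage] at hst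
    by_cases hs : ∃ r, (r, s) ∈ a.graph
    · obtain ⟨r, hr⟩ := hs
      have hmul : a * sng (s, t) = sng (r, t) := by
        refine ext' (Set.eq_singleton_iff_unique_mem.2 ⟨⟨s, hr, rfl⟩, ?_⟩)
        rintro ⟨r', t'⟩ ⟨y, hy, hy'⟩
        obtain ⟨rfl, rfl⟩ := Prod.mk.inj (mem_sng.1 hy')
        exact Prod.ext ((a.inj' hy hr).2 rfl) rfl
      rw [hmul] at hst
      have hE := (isOpen_tau_iff.1 hU).2 _ hst
      -- A bad `x` has a second point `(y, n)` with `y` in the range of `a` and `n` in the range of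
      -- one of the finitely many exceptional elements above `sng (r, t)`.
      have hG := (a.finite'.image Prod.snd).prod
        ((hE.biUnion fun e _ => e.finite').image Prod.snd)
      refine (finite_two_points (s, t) hG).subset ?_
      rintro x ⟨hx, hxU⟩
      have hrt : (r, t) ∈ (a * x).graph := ⟨s, hr, hx⟩
      obtain ⟨⟨r', t'⟩, hm, hne⟩ := exists_ne_of_ne_sng hrt fun h => hxU (by
        rw [Set.mem_preimage, h]; exact hst)
      obtain ⟨y, hy, hy'⟩ := mem_mul.1 hm
      refine ⟨hx, (y, t'), ⟨⟨_, hy, rfl⟩, ⟨(r', t'), Set.mem_biUnion ⟨hrt, hxU⟩ hm, rfl⟩⟩, ?_, hy'⟩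
      intro h
      obtain ⟨rfl, rfl⟩ := Prod.mk.inj h
      exact hne (by rw [(a.inj' hy hr).2 rfl])
    · have hmul : a * sng (s, t) = 0 := by
        refine ext' (Set.eq_empty_of_forall_notMem ?_)
        rintro ⟨r', t'⟩ ⟨y, hy, hy'⟩
        obtain ⟨rfl, rfl⟩ := Prod.mk.inj (mem_sng.1 hy')
        exact hs ⟨r', hy⟩
      rw [hmul] at hst
      obtain ⟨G, hG, hGa, h⟩ := exists_finite_of_mul_notMem hU hst a
      refine (finite_two_points (s, t) hG).subset ?_
      rintro x ⟨hx, hxU⟩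
      obtain ⟨q, hq, hqx⟩ := h x hxU
      refine ⟨hx, q, hq, ?_, hqx⟩
      rintro rfl
      exact hs (hGa _ hq)

theorem continuous_inv' : Continuous inv := by
  refine continuous_def.2 fun U hU => isOpen_tau_iff.2 ⟨fun h0 => ?_, fun p hp => ?_⟩
  · have h0' : (0 : SymInvSg ℕ 2) ∈ U := h0
    obtain ⟨F, hF, h⟩ := (isOpen_tau_iff.1 hU).1 h0'
    refine ⟨Prod.swap '' F, hF.image _, fun x hx => ?_⟩
    rcases h _ hx with ⟨m, hm⟩ | ⟨p, hp, hpx⟩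
    · refine Or.inl ⟨m, ?_⟩
      have h1 : (sng (m, m)).inv = x := by
        have h2 := congrArg inv hm
        rwa [inv_inv] at h2
      rw [← h1]
      refine ext' (Set.ext fun ⟨s, t⟩ => ?_)
      change (s, t) = (m, m) ↔ (t, s) = (m, m)
      simp only [Prod.mk.injEq]
      exact and_comm
    · exact Or.inr ⟨p.swap, ⟨p, hp, rfl⟩, hpx⟩
  · have hsw : (sng p).inv = sng p.swap := by
      refine ext' (Set.ext fun q => ?_)
      change q.swap = p ↔ q = p.swap
      exact ⟨fun h => by rw [← h, Prod.swap_swap], fun h => by rw [h, Prod.swap_swap]⟩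
    rw [Set.mem_preimage, hsw] at hp
    refine (((isOpen_tau_iff.1 hU).2 _ hp).image inv).subset ?_
    rintro x ⟨hx, hxU⟩
    refine ⟨x.inv, ⟨?_, hxU⟩, inv_inv x⟩
    change p.swap.swap ∈ x.graph
    rwa [Prod.swap_swap]

theorem shiftContinuous_tau : ShiftContinuous (SymInvSg ℕ 2) := by
  refine fun a => ⟨continuous_mul_left a, ?_⟩
  have h : (fun x : SymInvSg ℕ 2 => x * a) = fun x => (a.inv * x.inv).inv := by
    funext x
    rw [inv_mul, inv_inv, inv_inv]
  rw [h]
  exact continuous_inv'.comp ((continuous_mul_left a.inv).comp continuous_inv')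

/-! ### Compactness properties -/

theorem dense_compl_diag : Dense diagᶜ := by
  refine dense_iff_inter_open.2 fun U hU ⟨x, hx⟩ => ?_
  by_cases hxd : x ∈ diag
  · obtain ⟨n, rfl⟩ := hxd
    have hfin := (isOpen_tau_iff.1 hU).2 _ hx
    have hmem : ∀ k, (n + k + 1, n + k + 1) ∈ (diagPair n k).graph := fun k => Or.inr rfl
    have hmem' : ∀ k, (n, n) ∈ (diagPair n k).graph := fun k => Or.inl rfl
    have hinj : Function.Injective (diagPair n) := by
      intro k l hkl
      have h := hmem k
      rw [hkl] at h
      rcases h with h | h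
      · have := (Prod.mk.inj h).1
        omega
      · have := (Prod.mk.inj h).1
        omega
    obtain ⟨y, ⟨k, rfl⟩, hy⟩ := (Set.infinite_range_of_injective hinj).exists_notMem_finite hfin
    refine ⟨diagPair n k, by_contra fun h => hy ⟨hmem' k, h⟩, ?_⟩
    rintro ⟨m, hm⟩
    have h1 := hmem k
    have h2 := hmem' k
    rw [← hm] at h1 h2
    have h3 := (Prod.mk.inj (mem_sng.1 h1)).1
    have h4 := (Prod.mk.inj (mem_sng.1 h2)).1
    omega
  · exact ⟨x, hx, hxd⟩

theorem countablyPracompact_tau : CountablyPracompact (SymInvSg ℕ 2) := by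
  refine ⟨diagᶜ, dense_compl_diag, fun B hB hinf => ?_⟩
  by_cases hp : ∃ p, (B ∩ up p).Infinite
  · obtain ⟨p, hp⟩ := hp
    refine ⟨sng p, accPt_iff_nhds.2 fun V hV => ?_⟩
    obtain ⟨U, hUV, hU, hpU⟩ := mem_nhds_iff.1 hV
    obtain ⟨y, ⟨hyB, hyp⟩, hy⟩ := hp.exists_notMem_finite
      (((isOpen_tau_iff.1 hU).2 p hpU).insert (sng p))
    refine ⟨y, ⟨hUV (by_contra fun h => hy (Or.inr ⟨hyp, h⟩)), hyB⟩, fun h => hy (Or.inl h)⟩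
  · push Not at hp
    refine ⟨0, accPt_iff_nhds.2 fun V hV => ?_⟩
    obtain ⟨U, hUV, hU, hU0⟩ := mem_nhds_iff.1 hV
    obtain ⟨F, hF, h⟩ := (isOpen_tau_iff.1 hU).1 hU0
    obtain ⟨y, hyB, hy⟩ := hinf.exists_notMem_finite
      ((hF.biUnion fun p _ => hp p).insert (0 : SymInvSg ℕ 2))
    refine ⟨y, ⟨hUV (by_contra fun hyU => ?_), hyB⟩, fun h => hy (Or.inl h)⟩
    rcases h y hyU with hd | ⟨p, hp, hpy⟩
    · exact hB hyB hd
    · exact hy (Or.inr (Set.mem_biUnion hp ⟨hyB, hpy⟩))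

theorem not_compactSpace_tau : ¬ CompactSpace (SymInvSg ℕ 2) := by
  intro hc
  have hclosed : IsClosed diag := by
    refine ⟨isOpen_tau_iff.2 ⟨fun _ => ⟨∅, Set.finite_empty, fun x hx => Or.inl (not_not.1 hx)⟩,
      fun p hp => Set.finite_empty.subset ?_⟩⟩
    rintro x ⟨hx, hxd⟩
    obtain ⟨n, rfl⟩ := not_not.1 hxd
    obtain rfl : p = (n, n) := hx
    exact hp ⟨n, rfl⟩
  obtain ⟨t, ht⟩ := hclosed.isCompact.elim_finite_subcover (fun n : ℕ => up (n, n))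
    (fun n => isOpen_up _) (by
      rintro x ⟨n, rfl⟩
      exact Set.mem_iUnion.2 ⟨n, rfl⟩)
  obtain ⟨n, hn⟩ := t.exists_notMem
  obtain ⟨m, hm, hmn⟩ := Set.mem_iUnion₂.1 (ht ⟨n, rfl⟩)
  obtain rfl : m = n := (Prod.mk.inj (mem_sng.1 hmn)).1
  exact hn hm

theorem countable_symInvSg : Countable (SymInvSg ℕ 2) := by
  refine Function.Injective.countable (f := fun x : SymInvSg ℕ 2 => x.finite'.toFinset) ?_
  intro x y h
  exact ext' (Set.Finite.toFinset_inj.1 h)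

theorem not_omegaBoundedPracompact_tau : ¬ OmegaBoundedPracompact (SymInvSg ℕ 2) := by
  rintro ⟨D, hD, h⟩
  have := countable_symInvSg
  have hc := h D subset_rfl D.to_countable
  rw [hD.closure_eq] at hc
  exact not_compactSpace_tau ⟨hc⟩

end

end SymInvSg

/-- Choosing from each member of an infinite locally finite open family a point of the dense set
gives an infinite set, whose accumulation point contradicts local finiteness. -/
theorem CountablyPracompact.feeblyCompact {X : Type*} [TopologicalSpace X] [T1Space X]
    (h : CountablyPracompact X) : FeeblyCompact X := by
  obtain ⟨A, hA, hacc⟩ := h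
  intro F hF hlf
  by_contra hinf
  have hpt : ∀ U : F, ∃ x ∈ A, x ∈ (U : Set X) := fun U => by
    obtain ⟨x, hxU, hxA⟩ := hA.inter_open_nonempty U (hF U U.2).1 (hF U U.2).2
    exact ⟨x, hxA, hxU⟩
  choose f hfA hfU using hpt
  have : Infinite F := Set.infinite_coe_iff.2 hinf
  have hB : (Set.range f).Infinite := by
    intro hfin
    have := hfin.to_subtype
    -- otherwise a single point would lie in infinitely many members of the family
    obtain ⟨y, hy⟩ := Finite.exists_infinite_fiber (Set.rangeFactorization f)
    refine (Set.infinite_coe_iff.1 hy) ((hlf.point_finite (y : X)).subset ?_)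
    intro U hU
    have hUy : f U = y := congrArg Subtype.val hU
    change (y : X) ∈ (U : Set X)
    rw [← hUy]
    exact hfU U
  obtain ⟨x, hx⟩ := hacc _ (Set.range_subset_iff.2 hfA) hB
  obtain ⟨V, hV, hVfin⟩ := hlf x
  have hfin : (V ∩ Set.range f).Finite := by
    refine (hVfin.image f).subset ?_
    rintro _ ⟨hyV, U, rfl⟩
    exact ⟨U, ⟨f U, hfU U, hyV⟩, rfl⟩
  -- in a `T₁` space the finitely many points of `V ∩ range f` other than `x` can be removed
  have hW : ((V ∩ Set.range f) \ {x})ᶜ ∈ 𝓝 x :=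
    (hfin.subset Set.sdiff_subset).isClosed.isOpen_compl.mem_nhds fun h => h.2 rfl
  obtain ⟨y, ⟨⟨hyV, hyW⟩, hyB⟩, hyx⟩ := accPt_iff_nhds.1 hx _ (Filter.inter_mem hV hW)
  exact hyW ⟨⟨hyV, hyB⟩, hyx⟩

/-- There exists a Hausdorff shift-continuous topology on the countable
semigroup `𝓘_ω^2` which is countably pracompact (hence feebly compact) but neither
compact nor ω-bounded-pracompact. -/
theorem exists_countablyPracompact_not_omegaBoundedPracompact_topology :
    ∃ τ : TopologicalSpace (SymInvSg ℕ 2),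
      @T2Space (SymInvSg ℕ 2) τ ∧
      @ShiftContinuous (SymInvSg ℕ 2) τ _ ∧
      @CountablyPracompact (SymInvSg ℕ 2) τ ∧
      @FeeblyCompact (SymInvSg ℕ 2) τ ∧
      ¬ @CompactSpace (SymInvSg ℕ 2) τ ∧
      ¬ @OmegaBoundedPracompact (SymInvSg ℕ 2) τ := by
  let _ := SymInvSg.tau
  have := SymInvSg.t2Space_tau
  exact ⟨SymInvSg.tau, SymInvSg.t2Space_tau, SymInvSg.shiftContinuous_tau,
    SymInvSg.countablyPracompact_tau, SymInvSg.countablyPracompact_tau.feeblyCompact,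
    SymInvSg.not_compactSpace_tau, SymInvSg.not_omegaBoundedPracompact_tau⟩
end

section
/- Let n be any positive integer and λ any infinite cardinal, and suppose 𝓘_λ^n carries a shift-continuous T₁-topology (so it is a T₁-semitopological semigroup). Then for any subset A ⊆ λ, the subsemigroup 𝓘_A^n = {α ∈ 𝓘_λ^n : dom α ⊆ A and ran α ⊆ A} is a closed subset of 𝓘_λ^n. -/
/-!
Writing `e_x` for the idempotent `{(x, x)}`, the product `e_x α e_y` is `{(x, y)}` when
`(x, y) ∈ α` and is zero otherwise. Hence the set of `α` whose graph contains `(x, y)` is the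
preimage of the complement of `{0}` under a continuous two-sided shift, so it is open in a
`T₁`-topology. The set `𝓘_A^n` is the intersection of the closed complements of these sets over
the pairs `(x, y)` outside `A × A`. Positivity of `n` is what makes `e_x` an element of `𝓘_γ^n`.
-/

open Set Topology Filter

/-- The idempotent `{(x, x)}` of rank one. -/
def SymInvSg.point {γ : Type*} {n : ℕ} (hn : 0 < n) (x : γ) : SymInvSg γ n where
  graph := {(x, x)}
  inj' := by
    intro a b c d h h'
    simp only [Set.mem_singleton_iff, Prod.mk.injEq] at h h'
    simp [h.1, h.2, h'.1, h'.2]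
  finite' := Set.finite_singleton _
  card_le' := by rw [Set.ncard_singleton]; exact hn

theorem SymInvSg.point_mul_mul_point_eq_zero_iff {γ : Type*} {n : ℕ} (hn : 0 < n) (x y : γ)
    (α : SymInvSg γ n) :
    SymInvSg.point hn x * α * SymInvSg.point hn y = 0 ↔ (x, y) ∉ α.graph := by
  constructor
  · intro h hxy
    have hmem : (x, y) ∈ (SymInvSg.point hn x * α * SymInvSg.point hn y).graph :=
      ⟨y, ⟨x, rfl, hxy⟩, rfl⟩
    rw [h] at hmem
    exact hmem
  · intro hxy
    refine SymInvSg.ext' (Set.eq_empty_of_forall_notMem ?_)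
    rintro ⟨a, b⟩ ⟨z, ⟨w, haw, hwz⟩, hzb⟩
    obtain ⟨-, rfl⟩ := Prod.mk.inj haw
    obtain ⟨rfl, -⟩ := Prod.mk.inj hzb
    exact hxy hwz

theorem SymInvSg.isClosed_notMem_graph {γ : Type*} {n : ℕ} (hn : 0 < n)
    [TopologicalSpace (SymInvSg γ n)] [T1Space (SymInvSg γ n)]
    (hsc : ShiftContinuous (SymInvSg γ n)) (x y : γ) :
    IsClosed {α : SymInvSg γ n | (x, y) ∉ α.graph} := by
  have hcont : Continuous
      fun α : SymInvSg γ n => SymInvSg.point hn x * α * SymInvSg.point hn y :=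
    (hsc (SymInvSg.point hn y)).2.comp (hsc (SymInvSg.point hn x)).1
  have hclosed := (isClosed_singleton (x := (0 : SymInvSg γ n))).preimage hcont
  convert hclosed using 1
  ext α
  exact (SymInvSg.point_mul_mul_point_eq_zero_iff hn x y α).symm

/-- In a `T₁`-semitopological semigroup `𝓘_λ^n` (`n` a positive integer,
`λ` an infinite cardinal), the subsemigroup `𝓘_A^n` is closed for every `A ⊆ λ`. -/
theorem isClosed_restrictedTo {γ : Type*} [Infinite γ] {n : ℕ} (hn : 0 < n)
    [TopologicalSpace (SymInvSg γ n)] [T1Space (SymInvSg γ n)]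
    (hsc : ShiftContinuous (SymInvSg γ n)) (A : Set γ) :
    IsClosed (SymInvSg.restrictedTo A : Set (SymInvSg γ n)) := by
  have hinter : (SymInvSg.restrictedTo A : Set (SymInvSg γ n)) =
      ⋂ p ∈ {p : γ × γ | ¬(p.1 ∈ A ∧ p.2 ∈ A)}, {α | (p.1, p.2) ∉ α.graph} := by
    ext α
    simp only [SymInvSg.restrictedTo, Set.mem_iInter, Set.mem_setOf_eq]
    exact forall_congr' fun p => not_imp_not.symm
  rw [hinter]
  exact isClosed_biInter fun p _ => SymInvSg.isClosed_notMem_graph hn hsc p.1 p.2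
end

section
/- Let n be any positive integer and λ any infinite cardinal, and suppose 𝓘_λ^n carries a shift-continuous T₁-topology (so it is a T₁-semitopological semigroup). Then the band E(𝓘_λ^n), i.e., the set of all idempotents of 𝓘_λ^n, is a closed subset of 𝓘_λ^n. -/
/-! If `α` is not idempotent, its graph has a pair `(x, y)` with `x ≠ y`. The two-sided
translation `β ↦ {(x, x)} * β * {(y, y)}` is continuous and vanishes exactly when
`(x, y) ∉ β.graph`; since `{0}` is closed, the partial bijections sending `x` to `y` form an
open set. It contains `α`, and it contains no idempotent because graphs of idempotents lie
in the diagonal. -/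

open Set Topology Filter

namespace SymInvSg

variable {γ : Type*} {n : ℕ}

/-- The rank-one partial identity `{(x, x)}`; it lies in `𝓘_γ^n` because `0 < n`. -/
def point_s9 (hn : 0 < n) (x : γ) : SymInvSg γ n where
  graph := {(x, x)}
  inj' := by
    intro a b a' b' h h'
    simp only [Set.mem_singleton_iff, Prod.mk.injEq] at h h'
    simp [h.1, h.2, h'.1, h'.2]
  finite' := Set.finite_singleton _
  card_le' := by rw [Set.ncard_singleton]; exact hn

theorem mul_self_iff (a : SymInvSg γ n) :
    a * a = a ↔ ∀ x y, (x, y) ∈ a.graph → x = y := by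
  constructor
  · intro h x y hxy
    have h2 : (x, y) ∈ (a * a).graph := by rw [h]; exact hxy
    obtain ⟨z, hxz, hzy⟩ := h2
    have hz : z = y := (a.inj' hxz hxy).mp rfl
    subst hz
    exact (a.inj' hxz hzy).mpr rfl
  · intro h
    refine ext' ?_
    ext ⟨x, y⟩
    constructor
    · rintro ⟨z, hxz, hzy⟩
      obtain rfl : x = z := h _ _ hxz
      exact hzy
    · intro hxy
      obtain rfl : x = y := h _ _ hxy
      exact ⟨x, hxy, hxy⟩

theorem point_mul_mul_point_ne_zero (hn : 0 < n) (x y : γ) (b : SymInvSg γ n) :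
    point_s9 hn x * b * point_s9 hn y ≠ 0 ↔ (x, y) ∈ b.graph := by
  constructor
  · intro h
    by_contra hxy
    refine h (ext' (Set.eq_empty_of_forall_notMem ?_))
    rintro ⟨u, v⟩ ⟨w, ⟨s, hus, hsw⟩, hwv⟩
    have h1 : (u, s) = (x, x) := hus
    have h2 : (w, v) = (y, y) := hwv
    obtain ⟨-, rfl⟩ := Prod.mk.inj h1
    obtain ⟨rfl, -⟩ := Prod.mk.inj h2
    exact hxy hsw
  · intro hxy h
    have hmem : (x, y) ∈ (point_s9 hn x * b * point_s9 hn y).graph :=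
      ⟨y, ⟨x, rfl, hxy⟩, rfl⟩
    rw [h] at hmem
    exact hmem

end SymInvSg

open SymInvSg in
/-- In a `T₁`-semitopological semigroup `𝓘_λ^n` (`n` a positive integer,
`λ` an infinite cardinal), the band `E(𝓘_λ^n)` of idempotents is closed. -/
theorem isClosed_idempotents {γ : Type*} [Infinite γ] {n : ℕ} (hn : 0 < n)
    [TopologicalSpace (SymInvSg γ n)] [T1Space (SymInvSg γ n)]
    (hsc : ShiftContinuous (SymInvSg γ n)) :
    IsClosed {α : SymInvSg γ n | α * α = α} := by
  have hopen : ∀ x y : γ, IsOpen {b : SymInvSg γ n | (x, y) ∈ b.graph} := by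
    intro x y
    have hc : Continuous (fun b : SymInvSg γ n => point_s9 hn x * b * point_s9 hn y) :=
      (hsc (point_s9 hn y)).2.comp (hsc (point_s9 hn x)).1
    have ho := (isOpen_compl_singleton (x := (0 : SymInvSg γ n))).preimage hc
    convert ho using 1
    ext b
    exact (point_mul_mul_point_ne_zero hn x y b).symm
  rw [← isOpen_compl_iff, isOpen_iff_forall_mem_open]
  intro a ha
  have ha' : ¬ a * a = a := ha
  rw [mul_self_iff] at ha'
  push Not at ha'
  obtain ⟨x, y, hxy, hne⟩ := ha'
  exact ⟨_, fun b hb hbb => hne ((mul_self_iff b).mp hbb x y hb), hopen x y, hxy⟩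
end
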